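/- Let Σ be a signed graph and e an edge of Σ. There is a positive circle of Σ containing e if and only if e is not an isthmus (bridge) and either the block of Σ containing e is balanced, or that block is unbalanced and e is not a balancing edge of that block. -/

import Mathlib

/-- The sign of a walk in a signed graph: the product of the signs of its edges. -/
def walkSign {V : Type*} (G : SimpleGraph V) (σ : Sym2 V → ℤˣ) {u v : V}
    (w : G.Walk u v) : ℤˣ :=
  (w.edges.map σ).prod

/-- A set of vertices induces an inseparable subgraph: the induced subgraph is connected
and remains connected after deleting any one of its vertices (no cutpoint). -/
def inseparableOn {V : Type*} (G : SimpleGraph V) (S : Set V) : Prop :=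
  (G.induce S).Connected ∧ ∀ v ∈ S, (G.induce (S \ {v})).Connected

/-- `S` is (the vertex set of) a block of `G`: a maximal inseparable subgraph. -/
def isBlock {V : Type*} (G : SimpleGraph V) (S : Set V) : Prop :=
  inseparableOn G S ∧ ∀ T : Set V, S ⊆ T → inseparableOn G T → T = S

/-- The signed graph restricted to `S` (e.g. a block) is balanced: every circle lying
within `S` is positive. -/
def balancedOn {V : Type*} (G : SimpleGraph V) (σ : Sym2 V → ℤˣ) (S : Set V) : Prop :=
  ∀ ⦃a : V⦄ (w : G.Walk a a), w.IsCycle → (∀ x ∈ w.support, x ∈ S) →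
    walkSign G σ w = 1

/-!
Let `e = uv`. Opening a circle at `e` leaves a `u`-`v` path that avoids `e`, and the circle is
positive exactly when this path has sign `σ e`. A path joining two vertices of a block stays inside
the block, since adding it preserves inseparability; hence every circle through `e` lies in the
block of `e`.

If `e` lies on two circles of opposite sign, the two paths obtained by opening them form a negative
closed walk that avoids `e`, and a negative closed walk contains a negative circle. Hence an edge on
a positive circle is not a balancing edge.

Conversely, let `C` be a negative circle of the block that avoids `e`. Since the block has no
cutpoint, two disjoint paths join `u` and `v` to two vertices of `C`. The two arcs of `C` between
these vertices have opposite signs, so one of them completes the two paths to a `u`-`v` path of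
sign `σ e`, and that path avoids `e`.
-/

section

open SimpleGraph

variable {V : Type*} {G : SimpleGraph V} {S T : Set V} {a b c u v x y : V}

lemma support_subset_of_edges_subset {p : G.Walk a b} {q : G.Walk x y} (hp : ¬p.Nil)
    (h : p.edges ⊆ q.edges) : p.support ⊆ q.support := fun _ hz ↦
  let ⟨_, he, hze⟩ := (Walk.mem_support_iff_exists_mem_edges_of_not_nil hp).1 hz
  Walk.mem_support_of_mem_edges (h he) hze

lemma isPath_append {p : G.Walk a b} {q : G.Walk b c} (hp : p.IsPath) (hq : q.IsPath)
    (h : ∀ z ∈ p.support, z ∈ q.support → z = b) : (p.append q).IsPath := by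
  rw [Walk.isPath_def, Walk.support_append, List.nodup_append']
  refine ⟨hp.support_nodup, hq.support_nodup.tail, fun z hzp hzq ↦ ?_⟩
  obtain rfl := h z hzp (List.mem_of_mem_tail hzq)
  have hnodup := hq.support_nodup
  rw [← Walk.cons_tail_support, List.nodup_cons] at hnodup
  exact hnodup.1 hzq

lemma notMem_support_dropUntil [DecidableEq V] {p : G.Walk a b} (hp : p.IsPath)
    (hx : x ∈ p.support) (hxa : x ≠ a) : a ∉ (p.dropUntil x hx).support := by
  have hsplit : ((p.takeUntil x hx).append (p.dropUntil x hx)).IsPath := by rwa [p.take_spec hx]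
  exact fun ha ↦ hsplit.ne_of_mem_support_of_append hxa.symm (Walk.start_mem_support _) ha rfl

lemma exists_isPath_to_first_mem (w : G.Walk a b) (hb : b ∈ T) :
    ∃ t ∈ T, ∃ p : G.Walk a t, p.IsPath ∧ p.support ⊆ w.support ∧
      ∀ z ∈ p.support, z ∈ T → z = t := by
  classical
  obtain ⟨t, ht, htw, hfirst⟩ :=
    w.exists_mem_support_forall_mem_support_imp_eq {z ∈ w.support.toFinset | z ∈ T}
      ⟨b, by simp [hb]⟩
  have hsub := (w.takeUntil t htw).support_bypass_subset_support
  have hsub' := w.support_takeUntil_subset_support htw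
  refine ⟨t, (Finset.mem_filter.1 ht).2, (w.takeUntil t htw).bypass, Walk.bypass_isPath _,
    List.Subset.trans hsub hsub', fun z hz hzT ↦ hfirst z ?_ (hsub hz)⟩
  simpa [hzT] using hsub' (hsub hz)

lemma exists_walk_to_end_avoiding {p : G.Walk a b} (hp : p.IsPath) (hx : x ∈ p.support)
    (hyx : y ≠ x) :
    ∃ t ∈ ({a, b} : Set V), ∃ q : G.Walk x t, q.support ⊆ p.support ∧ y ∉ q.support := by
  obtain ⟨q, r, rfl⟩ := Walk.mem_support_iff_exists_append.1 hx
  by_cases hy : y ∈ r.support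
  · refine ⟨a, by simp, q.reverse, by simp, fun hyq ↦ ?_⟩
    exact hp.ne_of_mem_support_of_append hyx (by simpa using hyq) hy rfl
  · exact ⟨b, by simp, r, by simp, hy⟩

lemma exists_walk_of_connected_induce (hS : (G.induce S).Connected) (ha : a ∈ S) (hb : b ∈ S) :
    ∃ w : G.Walk a b, ∀ z ∈ w.support, z ∈ S := by
  obtain ⟨w, hw⟩ := (Subgraph.connected_iff_forall_exists_walk_subgraph _).1
    (connected_induce_iff.1 hS) |>.2 ha hb
  exact ⟨w, fun z hz ↦ hw.1 (w.mem_verts_toSubgraph.2 hz)⟩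

lemma exists_isPath_arcs {d : G.Walk c c} (hd : d.IsCycle) (ha : a ∈ d.support)
    (hb : b ∈ d.support) (hab : a ≠ b) :
    ∃ p q : G.Walk a b, p.IsPath ∧ q.IsPath ∧ (p.edges ++ q.edges).Perm d.edges := by
  classical
  have hbr : b ∈ (d.rotate a ha).support := (d.mem_support_rotate_iff a ha).2 hb
  obtain ⟨p, q, hpq⟩ := Walk.mem_support_iff_exists_append.1 hbr
  have hcycle : (p.append q).IsCycle := hpq ▸ hd.rotate ha
  refine ⟨p, q.reverse, hcycle.isPath_of_append_left (Walk.not_nil_of_ne hab.symm),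
    (hcycle.isPath_of_append_right (Walk.not_nil_of_ne hab)).reverse, ?_⟩
  calc (p.edges ++ q.reverse.edges).Perm (p.edges ++ q.edges) := by
        rw [Walk.edges_reverse]; exact (List.reverse_perm _).append_left _
    _ = (d.rotate a ha).edges := by rw [hpq, Walk.edges_append]
    List.Perm _ d.edges := (d.rotate_edges a ha).perm

lemma exists_isPath_of_mem_edges_isCycle {w : G.Walk c c} (hw : w.IsCycle)
    (he : s(u, v) ∈ w.edges) : ∃ p : G.Walk u v, p.IsPath ∧ (s(u, v) :: p.edges).Perm w.edges := by
  obtain ⟨p, q, hp, hq, hperm⟩ := exists_isPath_arcs hw (w.fst_mem_support_of_mem_edges he)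
    (w.snd_mem_support_of_mem_edges he) (w.adj_of_mem_edges he).ne
  have edges_eq {r : G.Walk u v} (hr : r.IsPath) (her : s(u, v) ∈ r.edges) :
      r.edges = [s(u, v)] := by
    rw [hr.eq_adj_toWalk_of_mem_edges her]; simp
  rcases List.mem_append.1 (hperm.mem_iff.2 he) with hep | heq
  · exact ⟨q, hq, by simpa [edges_eq hp hep] using hperm⟩
  · exact ⟨p, hp, by simpa [edges_eq hq heq] using List.perm_append_comm.trans hperm⟩

lemma notMem_edges_of_cons_perm {e : Sym2 V} {p : G.Walk a b} {w : G.Walk c c} (hw : w.IsCycle)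
    (h : (e :: p.edges).Perm w.edges) : e ∉ p.edges :=
  (List.nodup_cons.1 (h.nodup_iff.2 hw.edges_nodup)).1

/-- The linkage form of "`G[S]` has no cutpoint separating `{a, b}` from `T`": disjoint walks inside
`S` join `a` and `b` to `T`. Asking for paths would be equivalent, since walks can be shortened. -/
def DisjointlyLinked (G : SimpleGraph V) (S T : Set V) (a b : V) : Prop :=
  ∃ x ∈ T, ∃ y ∈ T, ∃ (p : G.Walk a x) (q : G.Walk b y),
    (∀ z ∈ p.support, z ∈ S) ∧ (∀ z ∈ q.support, z ∈ S) ∧ p.support.Disjoint q.support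

lemma DisjointlyLinked.exists_isPath (h : DisjointlyLinked G S T a b) :
    ∃ x ∈ T, ∃ y ∈ T, ∃ (p : G.Walk a x) (q : G.Walk b y), p.IsPath ∧ q.IsPath ∧
      (∀ z ∈ p.support, z ∈ S) ∧ (∀ z ∈ q.support, z ∈ S) ∧ p.support.Disjoint q.support := by
  classical
  obtain ⟨x, hx, y, hy, p, q, hpS, hqS, hpq⟩ := h
  have hp := p.support_bypass_subset_support
  have hq := q.support_bypass_subset_support
  exact ⟨x, hx, y, hy, p.bypass, q.bypass, p.bypass_isPath, q.bypass_isPath,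
    fun z hz ↦ hpS z (hp hz), fun z hz ↦ hqS z (hq hz), fun z hzp hzq ↦ hpq (hp hzp) (hq hzq)⟩

namespace inseparableOn

lemma connected_diff_singleton (hS : inseparableOn G S) (v : V) :
    (G.induce (S \ {v})).Connected := by
  by_cases hv : v ∈ S
  · exact hS.2 v hv
  · rw [Set.sdiff_singleton_eq_self hv]
    exact hS.1

lemma union_support (hS : inseparableOn G S) (ha : a ∈ S) (hb : b ∈ S) {p : G.Walk a b}
    (hp : p.IsPath) : inseparableOn G (S ∪ {z | z ∈ p.support}) := by
  refine ⟨induce_union_connected hS.1.preconnected p.connected_induce_support.preconnected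
    ⟨a, ha, p.start_mem_support⟩, fun y _ ↦ ?_⟩
  have hSy := hS.connected_diff_singleton y
  obtain ⟨s, hs⟩ := hSy.nonempty
  have hsub : S \ {y} ⊆ (S ∪ {z | z ∈ p.support}) \ {y} :=
    Set.sdiff_subset_sdiff_left Set.subset_union_left
  refine G.induce_connected_of_patches s (hsub hs) fun {x} hx ↦ ?_
  rcases hx with ⟨hxS | hxp, hxy⟩
  · exact ⟨_, hsub, hs, ⟨hxS, hxy⟩, hSy.preconnected _ _⟩
  · obtain ⟨t, ht, q, hqp, hyq⟩ := exists_walk_to_end_avoiding hp hxp (Ne.symm hxy)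
    have htS : t ∈ S := by rcases ht with rfl | rfl <;> assumption
    have hty : t ≠ y := fun h ↦ hyq (h ▸ q.end_mem_support)
    refine ⟨S \ {y} ∪ {z | z ∈ q.support}, Set.union_subset hsub fun z hz ↦
      ⟨Or.inr (hqp hz), fun h ↦ hyq (h ▸ hz)⟩, Or.inl hs, Or.inr q.start_mem_support, ?_⟩
    exact (induce_union_connected hSy.preconnected q.connected_induce_support.preconnected
      ⟨t, ⟨htS, hty⟩, q.end_mem_support⟩).preconnected _ _

lemma disjointlyLinked_of_mem (hS : inseparableOn G S) (hTS : T ⊆ S) (hT : T.Nontrivial)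
    (ha : a ∈ T) (hb : b ∈ S) (hba : b ≠ a) : DisjointlyLinked G S T a b := by
  obtain ⟨t, ht, hta⟩ := hT.exists_ne a
  obtain ⟨q, hq⟩ := exists_walk_of_connected_induce (hS.connected_diff_singleton a)
    ⟨hb, hba⟩ ⟨hTS ht, hta⟩
  refine ⟨a, ha, t, ht, Walk.nil, q, by simpa using hTS ha, fun z hz ↦ (hq z hz).1, ?_⟩
  simpa [List.disjoint_left] using fun haq ↦ (hq a haq).2 rfl

/- Disjoint paths from a neighbour `c` of `a` and from `a` are rerouted: a walk from `b` that
avoids `a` is followed until it first meets one of them and then continues along that path, while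
`a` takes the other one. -/
lemma disjointlyLinked_of_adj (hS : inseparableOn G S) (hca : DisjointlyLinked G S T c a)
    (hac : G.Adj a c) (hb : b ∈ S) (hba : b ≠ a) : DisjointlyLinked G S T a b := by
  classical
  obtain ⟨x, hx, y, hy, p, q, -, hq, hpS, hqS, hpq⟩ := hca.exists_isPath
  have hxa : x ≠ a := fun h ↦ hpq p.end_mem_support (h ▸ q.start_mem_support)
  obtain ⟨w, hw⟩ := exists_walk_of_connected_induce (hS.connected_diff_singleton a)
    ⟨hb, hba⟩ ⟨hpS x p.end_mem_support, hxa⟩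
  obtain ⟨t, ht, r, -, hrw, hrt⟩ := exists_isPath_to_first_mem w
    (T := {z | z ∈ p.support ∨ z ∈ q.support}) (Or.inl p.end_mem_support)
  have hrS (z) (hz : z ∈ r.support) : z ∈ S := (hw z (hrw hz)).1
  have har : a ∉ r.support := fun h ↦ (hw a (hrw h)).2 rfl
  rcases ht with htp | htq
  · have hdrop := p.support_dropUntil_subset_support htp
    refine ⟨y, hy, x, hx, q, r.append (p.dropUntil t htp), hqS, ?_, ?_⟩
    · grind [Walk.mem_support_append_iff]
    · intro z hzq hz
      rcases (Walk.mem_support_append_iff ..).1 hz with hzr | hzp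
      · exact hpq htp (hrt z hzr (Or.inr hzq) ▸ hzq)
      · exact hpq (hdrop hzp) hzq
  · have hdrop := q.support_dropUntil_subset_support htq
    refine ⟨x, hx, y, hy, Walk.cons hac p, r.append (q.dropUntil t htq), ?_, ?_, ?_⟩
    · simpa using ⟨hqS a q.start_mem_support, hpS⟩
    · grind [Walk.mem_support_append_iff]
    · have hat : t ≠ a := fun h ↦ har (h ▸ r.end_mem_support)
      intro z hz hz'
      rcases List.mem_cons.1 hz, (Walk.mem_support_append_iff ..).1 hz' with
        ⟨rfl | hzp, hzr | hzq⟩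
      · exact har hzr
      · exact notMem_support_dropUntil hq htq hat hzq
      · exact hpq hzp (hrt z hzr (Or.inl hzp) ▸ htq)
      · exact hpq hzp (hdrop hzq)

lemma disjointlyLinked (hS : inseparableOn G S) (hTS : T ⊆ S) (hT : T.Nontrivial)
    (ha : a ∈ S) (hb : b ∈ S) (hba : b ≠ a) : DisjointlyLinked G S T a b := by
  obtain ⟨t, ht⟩ := hT.nonempty
  obtain ⟨w, hw⟩ := exists_walk_of_connected_induce hS.1 ha (hTS ht)
  induction w generalizing b with
  | nil => exact hS.disjointlyLinked_of_mem hTS hT ht hb hba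
  | cons hac w ih =>
    have hwS := (List.forall_mem_cons.1 hw).2
    exact hS.disjointlyLinked_of_adj
      (ih (hwS _ w.start_mem_support) ha hac.ne ht hwS) hac hb hba

end inseparableOn

namespace isBlock

lemma support_subset_of_isPath (hS : isBlock G S) (ha : a ∈ S) (hb : b ∈ S) {p : G.Walk a b}
    (hp : p.IsPath) : ∀ z ∈ p.support, z ∈ S := by
  rw [← hS.2 _ Set.subset_union_left (hS.1.union_support ha hb hp)]
  exact fun _ ↦ Or.inr

lemma support_subset_of_isCycle (hS : isBlock G S) (hu : u ∈ S) (hv : v ∈ S) {w : G.Walk c c}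
    (hw : w.IsCycle) (he : s(u, v) ∈ w.edges) : ∀ z ∈ w.support, z ∈ S := by
  obtain ⟨p, hp, hperm⟩ := exists_isPath_of_mem_edges_isCycle hw he
  intro z hz
  obtain ⟨e, hew, hze⟩ := (Walk.mem_support_iff_exists_mem_edges_of_not_nil hw.not_nil).1 hz
  rcases List.mem_cons.1 (hperm.mem_iff.2 hew) with rfl | hep
  · rcases Sym2.mem_iff.1 hze with rfl | rfl <;> assumption
  · exact hS.support_subset_of_isPath hu hv hp z (Walk.mem_support_of_mem_edges hep hze)

end isBlock

variable {σ : Sym2 V → ℤˣ}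

lemma walkSign_cons (h : G.Adj a b) (p : G.Walk b c) :
    walkSign G σ (Walk.cons h p) = σ s(a, b) * walkSign G σ p := by
  simp [walkSign]

lemma walkSign_append (p : G.Walk a b) (q : G.Walk b c) :
    walkSign G σ (p.append q) = walkSign G σ p * walkSign G σ q := by
  simp [walkSign]

lemma walkSign_reverse (p : G.Walk a b) : walkSign G σ p.reverse = walkSign G σ p := by
  simp [walkSign, List.prod_reverse]

lemma walkSign_eq_of_cons_perm {p : G.Walk a b} {w : G.Walk x y} {e : Sym2 V}
    (h : (e :: p.edges).Perm w.edges) : walkSign G σ w = σ e * walkSign G σ p := by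
  simpa [walkSign] using ((h.map σ).prod_eq).symm

lemma walkSign_bypass [DecidableEq V] (w : G.Walk a b)
    (hw : ∀ ⦃c : V⦄ (d : G.Walk c c), d.IsCycle → d.edges ⊆ w.edges → walkSign G σ d = 1) :
    walkSign G σ w.bypass = walkSign G σ w := by
  induction w with
  | nil => rfl
  | @cons a b c h w ih =>
    have hbypass := ih fun _ d hd hdw ↦ hw d hd (List.Subset.trans hdw (by simp))
    rw [walkSign_cons, ← hbypass, Walk.bypass]
    split_ifs with ha
    · set q := w.bypass.takeUntil a ha
      have hq : q.IsPath := w.bypass_isPath.takeUntil ha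
      have hqw : q.edges ⊆ w.edges :=
        List.Subset.trans (w.bypass.edges_takeUntil_subset_edges ha) w.edges_bypass_subset_edges
      -- `bypass` cuts off a circle, or the edge `ab` traversed back and forth.
      have hclosed : σ s(a, b) * walkSign G σ q = 1 := by
        by_cases he : s(b, a) ∈ q.edges
        · rw [hq.eq_adj_toWalk_of_mem_edges he]
          simp [walkSign, Sym2.eq_swap]
        · rw [← walkSign_cons h]
          exact hw _ ((Walk.cons_isCycle_iff q h).2 ⟨hq, Sym2.eq_swap ▸ he⟩)
            (List.cons_subset_cons _ hqw)
      conv_rhs => rw [← w.bypass.take_spec ha, walkSign_append, ← mul_assoc, hclosed, one_mul]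
    · exact walkSign_cons h _

lemma exists_neg_isCycle_of_neg_closed_walk {w : G.Walk a a} (hw : walkSign G σ w = -1) :
    ∃ (c : V) (d : G.Walk c c), d.IsCycle ∧ d.edges ⊆ w.edges ∧ walkSign G σ d = -1 := by
  classical
  by_contra! hpos
  have hbypass := walkSign_bypass (σ := σ) w fun c d hd hdw ↦
    (Int.units_eq_one_or _).resolve_right (hpos c d hd hdw)
  rw [(Walk.isPath_iff_nil.1 w.bypass_isPath).eq_nil, hw] at hbypass
  exact absurd hbypass (by simp [walkSign])

lemma exists_neg_isCycle_avoiding {e : Sym2 V} {w : G.Walk a a} {d : G.Walk b b}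
    (hw : w.IsCycle) (hd : d.IsCycle) (hew : e ∈ w.edges) (hed : e ∈ d.edges)
    (hwd : walkSign G σ w * walkSign G σ d = -1) :
    ∃ (c : V) (r : G.Walk c c), r.IsCycle ∧ walkSign G σ r = -1 ∧ e ∉ r.edges ∧
      r.support ⊆ w.support ++ d.support := by
  induction e with | _ u v
  obtain ⟨p, -, hpw⟩ := exists_isPath_of_mem_edges_isCycle hw hew
  obtain ⟨q, -, hqd⟩ := exists_isPath_of_mem_edges_isCycle hd hed
  have hneg : walkSign G σ (p.append q.reverse) = -1 := by
    rw [walkSign_eq_of_cons_perm hpw, walkSign_eq_of_cons_perm hqd, mul_mul_mul_comm,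
      Int.units_mul_self, one_mul] at hwd
    rwa [walkSign_append, walkSign_reverse]
  obtain ⟨c, r, hr, hrpq, hrneg⟩ := exists_neg_isCycle_of_neg_closed_walk hneg
  have huv : u ≠ v := (w.adj_of_mem_edges hew).ne
  have hpw' : p.support ⊆ w.support := support_subset_of_edges_subset (Walk.not_nil_of_ne huv)
    fun _ hf ↦ hpw.subset (List.mem_cons_of_mem _ hf)
  have hqd' : q.support ⊆ d.support := support_subset_of_edges_subset (Walk.not_nil_of_ne huv)
    fun _ hf ↦ hqd.subset (List.mem_cons_of_mem _ hf)
  have her : s(u, v) ∉ r.edges := fun he ↦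
    (show s(u, v) ∈ p.edges ∨ s(u, v) ∈ q.edges by simpa using hrpq he).elim
      (notMem_edges_of_cons_perm hw hpw) (notMem_edges_of_cons_perm hd hqd)
  refine ⟨c, r, hr, hrneg, her, fun z hz ↦ ?_⟩
  have hzpq : z ∈ p.support ∨ z ∈ q.support := by
    simpa using support_subset_of_edges_subset hr.not_nil hrpq hz
  exact List.mem_append.2 (hzpq.imp (@hpw' z) (@hqd' z))

lemma exists_isPath_arc_walkSign_eq {d : G.Walk c c} (hd : d.IsCycle) (hneg : walkSign G σ d = -1)
    (ha : a ∈ d.support) (hb : b ∈ d.support) (hab : a ≠ b) (ε : ℤˣ) :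
    ∃ p : G.Walk a b, p.IsPath ∧ p.edges ⊆ d.edges ∧ walkSign G σ p = ε := by
  obtain ⟨p, q, hp, hq, hperm⟩ := exists_isPath_arcs hd ha hb hab
  have hmul : walkSign G σ p * walkSign G σ q = -1 := by
    rw [← hneg]
    simpa [walkSign] using (hperm.map σ).prod_eq
  have hsign : walkSign G σ p = ε ∨ walkSign G σ q = ε := by
    generalize walkSign G σ p = s, walkSign G σ q = t at hmul
    revert s t ε
    decide
  rcases hsign with h | h
  · exact ⟨p, hp, List.Subset.trans (List.subset_append_left _ _) hperm.subset, h⟩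
  · exact ⟨q, hq, List.Subset.trans (List.subset_append_right _ _) hperm.subset, h⟩

lemma exists_isPath_walkSign_eq_avoiding (hS : inseparableOn G S) {d : G.Walk c c}
    (hd : d.IsCycle) (hdS : ∀ z ∈ d.support, z ∈ S) (hneg : walkSign G σ d = -1)
    (ha : a ∈ S) (hb : b ∈ S) (hab : a ≠ b) (he : s(a, b) ∉ d.edges) (ε : ℤˣ) :
    ∃ p : G.Walk a b, p.IsPath ∧ s(a, b) ∉ p.edges ∧ walkSign G σ p = ε := by
  have hnontriv : {z | z ∈ d.support}.Nontrivial :=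
    ⟨c, d.start_mem_support, d.snd, d.getVert_mem_support 1, (d.adj_snd hd.not_nil).ne⟩
  obtain ⟨x₀, hx₀, y₀, hy₀, p₀, q₀, -, -, hdisj₀⟩ :=
    hS.disjointlyLinked hdS hnontriv ha hb hab.symm
  obtain ⟨x, hx, p, hp, hp₀, hpx⟩ := exists_isPath_to_first_mem p₀ hx₀
  obtain ⟨y, hy, q, hq, hq₀, hqy⟩ := exists_isPath_to_first_mem q₀ hy₀
  have hdisj : p.support.Disjoint q.support := fun z hzp hzq ↦ hdisj₀ (hp₀ hzp) (hq₀ hzq)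
  have hxy : x ≠ y := fun h ↦ hdisj p.end_mem_support (h ▸ q.end_mem_support)
  obtain ⟨r, hr, hrd, hrsign⟩ := exists_isPath_arc_walkSign_eq hd hneg hx hy hxy
    (walkSign G σ p * ε * walkSign G σ q)
  have hrd' := support_subset_of_edges_subset (Walk.not_nil_of_ne hxy) hrd
  refine ⟨p.append (r.append q.reverse), isPath_append hp (isPath_append hr hq.reverse ?_) ?_,
    ?_, ?_⟩
  · exact fun z hzr hzq ↦ hqy z (by simpa using hzq) (hrd' hzr)
  · intro z hzp hz
    rcases (Walk.mem_support_append_iff ..).1 hz with hzr | hzq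
    · exact hpx z hzp (hrd' hzr)
    · exact (hdisj hzp (by simpa using hzq)).elim
  · have hep (h : s(a, b) ∈ p.edges) : False :=
      hdisj (p.snd_mem_support_of_mem_edges h) q.start_mem_support
    have heq (h : s(a, b) ∈ q.edges) : False :=
      hdisj p.start_mem_support (q.fst_mem_support_of_mem_edges h)
    simpa using ⟨hep, fun h ↦ he (hrd h), heq⟩
  · rw [walkSign_append, walkSign_append, walkSign_reverse, hrsign]
    have hcancel : ∀ s t ε : ℤˣ, s * (s * ε * t * t) = ε := by decide
    exact hcancel _ _ _

lemma exists_neg_isCycle_of_not_balancedOn (h : ¬balancedOn G σ S) :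
    ∃ (c : V) (d : G.Walk c c), d.IsCycle ∧ (∀ z ∈ d.support, z ∈ S) ∧ walkSign G σ d = -1 := by
  unfold balancedOn at h
  push Not at h
  obtain ⟨c, d, hd, hdS, hne⟩ := h
  exact ⟨c, d, hd, hdS, (Int.units_eq_one_or _).resolve_left hne⟩

end

theorem edge_in_positive_circle_iff_general {V : Type*}
    (G : SimpleGraph V) (σ : Sym2 V → ℤˣ) {u v : V} (huv : G.Adj u v)
    (S : Set V) (hS : isBlock G S) (hu : u ∈ S) (hv : v ∈ S) :
    (∃ (a : V) (w : G.Walk a a), w.IsCycle ∧ s(u, v) ∈ w.edges ∧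
        walkSign G σ w = 1) ↔
      ((∃ (a : V) (w : G.Walk a a), w.IsCycle ∧ s(u, v) ∈ w.edges) ∧
        (balancedOn G σ S ∨
          (¬ balancedOn G σ S ∧
            ∃ (a : V) (w : G.Walk a a), w.IsCycle ∧ (∀ x ∈ w.support, x ∈ S) ∧
              walkSign G σ w = -1 ∧ s(u, v) ∉ w.edges))) := by
  constructor
  · rintro ⟨a, w, hw, hew, hpos⟩
    refine ⟨⟨a, w, hw, hew⟩, or_iff_not_imp_left.2 fun hunbal ↦ ⟨hunbal, ?_⟩⟩
    obtain ⟨b, d, hd, hdS, hneg⟩ := exists_neg_isCycle_of_not_balancedOn hunbal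
    by_cases hed : s(u, v) ∈ d.edges
    · obtain ⟨c, r, hr, hrneg, her, hsub⟩ :=
        exists_neg_isCycle_avoiding hw hd hew hed (by rw [hpos, hneg, one_mul])
      exact ⟨c, r, hr, fun z hz ↦ (List.mem_append.1 (hsub hz)).elim
        (hS.support_subset_of_isCycle hu hv hw hew z) (hdS z), hrneg, her⟩
    · exact ⟨b, d, hd, hdS, hneg, hed⟩
  · rintro ⟨⟨a, w, hw, hew⟩, hbal | ⟨-, c, d, hd, hdS, hneg, hed⟩⟩
    · exact ⟨a, w, hw, hew, hbal w hw (hS.support_subset_of_isCycle hu hv hw hew)⟩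
    · obtain ⟨p, hp, hep, hsign⟩ := exists_isPath_walkSign_eq_avoiding hS.1 hd hdS hneg
        hv hu huv.ne' (Sym2.eq_swap ▸ hed) (σ s(u, v))
      refine ⟨u, SimpleGraph.Walk.cons huv p,
        (SimpleGraph.Walk.cons_isCycle_iff p huv).2 ⟨hp, Sym2.eq_swap ▸ hep⟩, by simp, ?_⟩
      rw [walkSign_cons, hsign, Int.units_mul_self]

/-- An edge of a signed graph lies in a positive circle iff it is not an isthmus (it lies
in some circle) and either its block is balanced, or its block is unbalanced and the edge
is not a balancing edge of that block (some negative circle of the block avoids it). -/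
theorem edge_in_positive_circle_iff {V : Type*} [Fintype V]
    (G : SimpleGraph V) (σ : Sym2 V → ℤˣ) {u v : V} (huv : G.Adj u v)
    (S : Set V) (hS : isBlock G S) (hu : u ∈ S) (hv : v ∈ S) :
    (∃ (a : V) (w : G.Walk a a), w.IsCycle ∧ s(u, v) ∈ w.edges ∧
        walkSign G σ w = 1) ↔
      ((∃ (a : V) (w : G.Walk a a), w.IsCycle ∧ s(u, v) ∈ w.edges) ∧
        (balancedOn G σ S ∨
          (¬ balancedOn G σ S ∧
            ∃ (a : V) (w : G.Walk a a), w.IsCycle ∧ (∀ x ∈ w.support, x ∈ S) ∧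
              walkSign G σ w = -1 ∧ s(u, v) ∉ w.edges))) :=
  edge_in_positive_circle_iff_general G σ huv S hS hu hv
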